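/- Let p be a prime, n ≥ 1, and f ∈ 𝔽_p[x₁,…,xₙ] a polynomial of total degree at most n. Let λ be a weighting such that the monomial x₁x₂⋯xₙ appears in f with nonzero coefficient and its λ-weight λ₁+⋯+λₙ equals the maximal λ-weight among the exponent vectors of f (i.e. x₁⋯xₙ appears in init_λ(f)). Then Tr(f^{p−1}) = Tr((init_λ f)^{p−1}). In particular, for c ∈ 𝔽_p, the map g ↦ c·Tr(f^{p−1}·g) is a Frobenius splitting of 𝔽_p[x₁,…,xₙ] if and only if g ↦ c·Tr((init_λ f)^{p−1}·g) is. -/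

import Mathlib

open MvPolynomial

/-- The near-splitting `Tr` on `𝔽_p[x₁,…,xₙ]`: on a monomial `∏ xᵢ^{eᵢ}` it gives
`∏ xᵢ^{(eᵢ+1)/p - 1}` if `p ∣ eᵢ + 1` for all `i`, and `0` otherwise, extended
`𝔽_p`-linearly (note that `c^{1/p} = c` for `c ∈ 𝔽_p`). -/
noncomputable def Tr (p n : ℕ) (g : MvPolynomial (Fin n) (ZMod p)) :
    MvPolynomial (Fin n) (ZMod p) :=
  ∑ m ∈ g.support,
    if ∀ i, p ∣ (m i + 1) then
      monomial (Finsupp.equivFunOnFinite.symm fun i => (m i + 1) / p - 1) (g.coeff m)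
    else 0

/-- A Frobenius splitting is an additive map `φ` with `φ (a^p * b) = a * φ b` and `φ 1 = 1`. -/
def IsFrobeniusSplitting (p : ℕ) {R : Type*} [CommRing R] (φ : R → R) : Prop :=
  (∀ a b : R, φ (a + b) = φ a + φ b) ∧ (∀ a b : R, φ (a ^ p * b) = a * φ b) ∧ φ 1 = 1

/-- The `λ`-weight of an exponent vector `m` is `∑ᵢ λᵢ·mᵢ`. -/
def wtOf {n : ℕ} (lam : Fin n → ℕ) (m : Fin n →₀ ℕ) : ℕ := ∑ i, lam i * m i

/-- The leading form `init_λ(g)`: the sum of the terms of `g` of maximal `λ`-weight. -/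
noncomputable def initForm {R : Type*} [CommRing R] {n : ℕ} (lam : Fin n → ℕ)
    (g : MvPolynomial (Fin n) R) : MvPolynomial (Fin n) R :=
  ∑ m ∈ g.support.filter (fun m => ∀ m' ∈ g.support, wtOf lam m' ≤ wtOf lam m),
    MvPolynomial.monomial m (g.coeff m)

/-- The initial ideal `init_λ(I)`, spanned by the leading forms of the nonzero
elements of `I`. -/
noncomputable def initIdeal {R : Type*} [CommRing R] {n : ℕ} (lam : Fin n → ℕ)
    (I : Ideal (MvPolynomial (Fin n) R)) : Ideal (MvPolynomial (Fin n) R) :=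
  Ideal.span {h | ∃ g ∈ I, g ≠ 0 ∧ initForm lam g = h}

/-!
The coefficient of `x^m` in `Tr g` is the coefficient of `x^(p m + (p - 1) 𝟙)` in `g`, where
`𝟙 = (1, …, 1)`. If `deg f ≤ n`, then `f ^ (p - 1)` has degree at most `(p - 1) n`, so only `m = 0`
contributes and `Tr (f ^ (p - 1))` is the constant given by the coefficient of `x^((p - 1) 𝟙)`.
That exponent has the largest weight that can occur in `f ^ (p - 1)`, so its coefficient depends
only on the part of `f` of weight `λ(𝟙)`, which `f` shares with `init_λ f`. Finally,
`g ↦ c Tr (F g)` is always additive and inverse Frobenius linear, so it is a splitting if and only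
if it maps `1` to `1`.
-/

section TopComponent

variable {σ R M : Type*} [CommSemiring R] [AddCommMonoid M] [PartialOrder M]
  {w : σ → M} {a b : M} {f g : MvPolynomial σ R}

theorem weight_le_of_mem_support_mul [IsOrderedAddMonoid M]
    (hf : ∀ d ∈ f.support, Finsupp.weight w d ≤ a)
    (hg : ∀ d ∈ g.support, Finsupp.weight w d ≤ b) :
    ∀ d ∈ (f * g).support, Finsupp.weight w d ≤ a + b := by
  classical
  intro d hd
  obtain ⟨u, hu, v, hv, rfl⟩ := Finset.mem_add.mp (support_mul f g hd)
  rw [map_add]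
  exact add_le_add (hf u hu) (hg v hv)

theorem weight_le_of_mem_support_pow [IsOrderedAddMonoid M]
    (hf : ∀ d ∈ f.support, Finsupp.weight w d ≤ a) (k : ℕ) :
    ∀ d ∈ (f ^ k).support, Finsupp.weight w d ≤ k • a := by
  induction k with
  | zero =>
    intro d hd
    rw [pow_zero] at hd
    rw [zero_nsmul, isWeightedHomogeneous_one R w (mem_support_iff.mp hd)]
  | succ k ih =>
    rw [pow_succ, succ_nsmul]
    exact weight_le_of_mem_support_mul ih hf

theorem weightedHomogeneousComponent_mul_of_weight_le [IsOrderedCancelAddMonoid M]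
    (hf : ∀ d ∈ f.support, Finsupp.weight w d ≤ a)
    (hg : ∀ d ∈ g.support, Finsupp.weight w d ≤ b) :
    weightedHomogeneousComponent w (a + b) (f * g) =
      weightedHomogeneousComponent w a f * weightedHomogeneousComponent w b g := by
  classical
  ext d
  rw [coeff_weightedHomogeneousComponent, coeff_mul, coeff_mul, Finset.ite_sum_zero]
  refine Finset.sum_congr rfl fun ⟨u, v⟩ huv => ?_
  rw [coeff_weightedHomogeneousComponent, coeff_weightedHomogeneousComponent,
    ite_zero_mul_ite_zero]
  by_cases hu : coeff u f = 0
  · simp only [hu, zero_mul, ite_self]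
  by_cases hv : coeff v g = 0
  · simp only [hv, mul_zero, ite_self]
  rw [← Finset.HasAntidiagonal.mem_antidiagonal.mp huv, map_add]
  exact if_congr (add_eq_add_iff_eq_and_eq (hf u (mem_support_iff.mpr hu))
    (hg v (mem_support_iff.mpr hv))) rfl rfl

theorem weightedHomogeneousComponent_pow_of_weight_le [IsOrderedCancelAddMonoid M]
    (hf : ∀ d ∈ f.support, Finsupp.weight w d ≤ a) (k : ℕ) :
    weightedHomogeneousComponent w (k • a) (f ^ k) = weightedHomogeneousComponent w a f ^ k := by
  induction k with
  | zero =>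
    rw [zero_nsmul, pow_zero, pow_zero]
    exact (isWeightedHomogeneous_one R w).weightedHomogeneousComponent_same
  | succ k ih =>
    rw [pow_succ, pow_succ, succ_nsmul, ← ih]
    exact weightedHomogeneousComponent_mul_of_weight_le (weight_le_of_mem_support_pow hf k) hf

end TopComponent

section InitForm

variable {R : Type*} [CommRing R] {n : ℕ}

theorem wtOf_eq_weight (lam : Fin n → ℕ) (m : Fin n →₀ ℕ) :
    wtOf lam m = Finsupp.weight lam m := by
  simp only [wtOf, Finsupp.weight_eq_sum, smul_eq_mul, mul_comm]

theorem coeff_initForm (lam : Fin n → ℕ) (f : MvPolynomial (Fin n) R) (m : Fin n →₀ ℕ) :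
    (initForm lam f).coeff m =
      if m ∈ f.support ∧ ∀ m' ∈ f.support, wtOf lam m' ≤ wtOf lam m then f.coeff m else 0 := by
  simp only [initForm, coeff_sum, coeff_monomial, Finset.sum_ite_eq', Finset.mem_filter]

theorem support_initForm_subset (lam : Fin n → ℕ) (f : MvPolynomial (Fin n) R) :
    (initForm lam f).support ⊆ f.support := by
  intro m hm
  rw [mem_support_iff, coeff_initForm] at hm
  exact (ite_ne_right_iff.mp hm).1.1

theorem weightedHomogeneousComponent_initForm {lam : Fin n → ℕ} {a : ℕ}
    {f : MvPolynomial (Fin n) R} (hf : ∀ m ∈ f.support, Finsupp.weight lam m ≤ a) :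
    weightedHomogeneousComponent lam a (initForm lam f) =
      weightedHomogeneousComponent lam a f := by
  classical
  ext m
  rw [coeff_weightedHomogeneousComponent, coeff_weightedHomogeneousComponent]
  refine ite_congr rfl (fun hm => ?_) fun _ => rfl
  by_cases hmf : m ∈ f.support
  · rw [coeff_initForm]
    refine if_pos ⟨hmf, fun m' hm' => ?_⟩
    simpa only [wtOf_eq_weight, hm] using hf m' hm'
  · rw [notMem_support_iff.mp hmf,
      notMem_support_iff.mp fun h => hmf (support_initForm_subset lam f h)]

theorem coeff_nsmul_pow_initForm {lam : Fin n → ℕ} {f : MvPolynomial (Fin n) R}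
    {d : Fin n →₀ ℕ} (hf : ∀ m ∈ f.support, wtOf lam m ≤ wtOf lam d) (k : ℕ) :
    (initForm lam f ^ k).coeff (k • d) = (f ^ k).coeff (k • d) := by
  classical
  simp only [wtOf_eq_weight] at hf
  have top_eq : weightedHomogeneousComponent lam (k • Finsupp.weight lam d) (initForm lam f ^ k) =
      weightedHomogeneousComponent lam (k • Finsupp.weight lam d) (f ^ k) := by
    rw [weightedHomogeneousComponent_pow_of_weight_le hf,
      weightedHomogeneousComponent_pow_of_weight_le
        fun m hm => hf m (support_initForm_subset lam f hm),
      weightedHomogeneousComponent_initForm hf]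
  simpa only [coeff_weightedHomogeneousComponent, map_nsmul, if_true] using
    congrArg (coeff (k • d)) top_eq

end InitForm

section Trace

variable {p n : ℕ}

/-- The exponent vector `(1, …, 1)` of the monomial `x₁⋯xₙ`. -/
noncomputable def allOnes (n : ℕ) : Fin n →₀ ℕ :=
  Finsupp.equivFunOnFinite.symm fun _ => 1

@[simp]
theorem allOnes_apply (i : Fin n) : allOnes n i = 1 := rfl

theorem degree_allOnes (n : ℕ) : (allOnes n).degree = n := by
  simp [Finsupp.degree_eq_sum]

theorem dvd_add_one_and_div_sub_one_eq_iff (hp : 0 < p) (a b : ℕ) :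
    p ∣ a + 1 ∧ (a + 1) / p - 1 = b ↔ a = p * b + (p - 1) := by
  constructor
  · rintro ⟨⟨k, hk⟩, rfl⟩
    obtain ⟨j, rfl⟩ : ∃ j, k = j + 1 := Nat.exists_eq_succ_of_ne_zero (by rintro rfl; omega)
    rw [hk, Nat.mul_div_cancel_left _ hp, Nat.add_sub_cancel]
    rw [mul_add_one] at hk
    omega
  · rintro rfl
    have h : p * b + (p - 1) + 1 = p * (b + 1) := by rw [mul_add_one]; omega
    rw [h, Nat.mul_div_cancel_left _ hp]
    exact ⟨dvd_mul_right p _, Nat.add_sub_cancel ..⟩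

theorem coeff_Tr (hp : 0 < p) (g : MvPolynomial (Fin n) (ZMod p)) (m : Fin n →₀ ℕ) :
    (Tr p n g).coeff m = g.coeff (p • m + (p - 1) • allOnes n) := by
  classical
  have exponent_iff (u : Fin n →₀ ℕ) :
      ((∀ i, p ∣ u i + 1) ∧ Finsupp.equivFunOnFinite.symm (fun i => (u i + 1) / p - 1) = m) ↔
        u = p • m + (p - 1) • allOnes n := by
    simp [Finsupp.ext_iff, ← forall_and, dvd_add_one_and_div_sub_one_eq_iff hp]
  simp only [Tr, coeff_sum, apply_ite (coeff m), coeff_monomial, coeff_zero, ← ite_and,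
    exponent_iff, Finset.sum_ite_eq', mem_support_iff]
  exact ite_eq_left_iff.mpr fun h => (not_not.mp h).symm

theorem Tr_add (hp : 0 < p) (a b : MvPolynomial (Fin n) (ZMod p)) :
    Tr p n (a + b) = Tr p n a + Tr p n b := by
  ext m
  simp only [coeff_Tr hp, coeff_add]

theorem nsmul_le_nsmul_add_pred_nsmul_allOnes_iff (hp : 0 < p) (u m : Fin n →₀ ℕ) :
    p • u ≤ p • m + (p - 1) • allOnes n ↔ u ≤ m := by
  simp only [Finsupp.le_def, Finsupp.add_apply, Finsupp.smul_apply, allOnes_apply, smul_eq_mul,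
    mul_one]
  refine forall_congr' fun i => ?_
  calc p * u i ≤ p * m i + (p - 1) ↔ p * u i < p * (m i + 1) := by rw [mul_add_one]; omega
    _ ↔ u i < m i + 1 := Nat.mul_lt_mul_left hp
    _ ↔ u i ≤ m i := Nat.lt_add_one_iff

theorem Tr_pow_mul [Fact p.Prime] (a b : MvPolynomial (Fin n) (ZMod p)) :
    Tr p n (a ^ p * b) = a * Tr p n b := by
  have hp : 0 < p := (Fact.out : p.Prime).pos
  induction a using MvPolynomial.induction_on' with
  | add x y hx hy => rw [add_pow_char, add_mul, Tr_add hp, hx, hy, add_mul]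
  | monomial u c =>
    ext m
    rw [coeff_Tr hp, monomial_pow, ZMod.pow_card, coeff_monomial_mul', coeff_monomial_mul']
    refine ite_congr (propext (nsmul_le_nsmul_add_pred_nsmul_allOnes_iff hp u m))
      (fun hum => ?_) fun _ => rfl
    obtain ⟨v, rfl⟩ := exists_add_of_le hum
    rw [coeff_Tr hp, smul_add, add_assoc, add_tsub_cancel_left, add_tsub_cancel_left]

theorem Tr_eq_C_coeff (hp : 0 < p) {g : MvPolynomial (Fin n) (ZMod p)}
    (hg : g.totalDegree < (p - 1) * n + p) :
    Tr p n g = C (g.coeff ((p - 1) • allOnes n)) := by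
  classical
  ext m
  rw [coeff_Tr hp, coeff_C]
  split_ifs with hm
  · rw [← hm, smul_zero, zero_add]
  · refine coeff_eq_zero_of_totalDegree_lt (hg.trans_le ?_)
    have degree_pos : 0 < m.degree :=
      Nat.pos_of_ne_zero (mt (Finsupp.degree_eq_zero_iff m).mp (Ne.symm hm))
    rw [← Finsupp.degree_apply, map_add, map_nsmul, map_nsmul, degree_allOnes, smul_eq_mul,
      smul_eq_mul, add_comm]
    gcongr
    exact Nat.le_mul_of_pos_right p degree_pos

theorem Tr_pow_pred_eq_C_coeff (hp : 0 < p) {f : MvPolynomial (Fin n) (ZMod p)}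
    (hf : f.totalDegree ≤ n) :
    Tr p n (f ^ (p - 1)) = C ((f ^ (p - 1)).coeff ((p - 1) • allOnes n)) := by
  refine Tr_eq_C_coeff hp ?_
  calc (f ^ (p - 1)).totalDegree ≤ (p - 1) * f.totalDegree := totalDegree_pow f (p - 1)
    _ ≤ (p - 1) * n := Nat.mul_le_mul_left _ hf
    _ < (p - 1) * n + p := Nat.lt_add_of_pos_right hp

theorem Tr_pow_pred_initForm (hp : 0 < p) {lam : Fin n → ℕ} {f : MvPolynomial (Fin n) (ZMod p)}
    (hdeg : f.totalDegree ≤ n) (hmax : ∀ m ∈ f.support, wtOf lam m ≤ wtOf lam (allOnes n)) :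
    Tr p n (initForm lam f ^ (p - 1)) = Tr p n (f ^ (p - 1)) := by
  have hdeg_init : (initForm lam f).totalDegree ≤ n :=
    (totalDegree_le_of_support_subset (support_initForm_subset lam f)).trans hdeg
  rw [Tr_pow_pred_eq_C_coeff hp hdeg, Tr_pow_pred_eq_C_coeff hp hdeg_init,
    coeff_nsmul_pow_initForm hmax]

theorem isFrobeniusSplitting_C_mul_Tr_mul_iff [Fact p.Prime] (c : ZMod p)
    (F : MvPolynomial (Fin n) (ZMod p)) :
    IsFrobeniusSplitting p (fun g => C c * Tr p n (F * g)) ↔ C c * Tr p n F = 1 := by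
  simp only [IsFrobeniusSplitting, mul_one]
  refine ⟨fun h => h.2.2, fun map_one => ⟨fun a b => ?_, fun a b => ?_, map_one⟩⟩
  · rw [mul_add, Tr_add (Fact.out : p.Prime).pos, mul_add]
  · rw [mul_left_comm F, Tr_pow_mul, mul_left_comm]

end Trace

theorem stmt_12_general {p : ℕ} (hp : p.Prime) {n : ℕ} (lam : Fin n → ℕ)
    (f : MvPolynomial (Fin n) (ZMod p)) (hdeg : f.totalDegree ≤ n)
    (hmax : ∀ m ∈ f.support,
      wtOf lam m ≤ wtOf lam (Finsupp.equivFunOnFinite.symm fun _ : Fin n => 1)) :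
    Tr p n (f ^ (p - 1)) = Tr p n ((initForm lam f) ^ (p - 1)) ∧
      ∀ c : ZMod p,
        IsFrobeniusSplitting p (fun g => C c * Tr p n (f ^ (p - 1) * g)) ↔
          IsFrobeniusSplitting p (fun g => C c * Tr p n ((initForm lam f) ^ (p - 1) * g)) := by
  have : Fact p.Prime := ⟨hp⟩
  have Tr_eq : Tr p n (f ^ (p - 1)) = Tr p n (initForm lam f ^ (p - 1)) :=
    (Tr_pow_pred_initForm hp.pos hdeg hmax).symm
  refine ⟨Tr_eq, fun c => ?_⟩
  rw [isFrobeniusSplitting_C_mul_Tr_mul_iff, isFrobeniusSplitting_C_mul_Tr_mul_iff, Tr_eq]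

/-- if `deg f ≤ n` and the monomial `x₁⋯xₙ` appears in `init_λ(f)`, then
`Tr(f^{p−1}) = Tr((init_λ f)^{p−1})`; in particular `g ↦ c·Tr(f^{p−1}·g)` is a Frobenius
splitting iff `g ↦ c·Tr((init_λ f)^{p−1}·g)` is. -/
theorem stmt_12 {p : ℕ} (hp : p.Prime) {n : ℕ} (hn : 1 ≤ n) (lam : Fin n → ℕ)
    (f : MvPolynomial (Fin n) (ZMod p)) (hdeg : f.totalDegree ≤ n)
    (hmem : (Finsupp.equivFunOnFinite.symm fun _ : Fin n => 1) ∈ f.support)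
    (hmax : ∀ m ∈ f.support,
      wtOf lam m ≤ wtOf lam (Finsupp.equivFunOnFinite.symm fun _ : Fin n => 1)) :
    Tr p n (f ^ (p - 1)) = Tr p n ((initForm lam f) ^ (p - 1)) ∧
      ∀ c : ZMod p,
        IsFrobeniusSplitting p (fun g => C c * Tr p n (f ^ (p - 1) * g)) ↔
          IsFrobeniusSplitting p (fun g => C c * Tr p n ((initForm lam f) ^ (p - 1) * g)) :=
  stmt_12_general hp lam f hdeg hmax
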